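/- Let k > 0 and λ₀' > 0 and set r̃ = (π/4)·min{ |k² − λ₀'²|^{−1/2}, 1/λ₀' } (with the first entry omitted if k² = λ₀'²). Define ψ₀ on the lower half ball B⁻_{r̃}(0) ⊂ ℝ³ by: ψ₀(y₁,y₂,y₃) = 8 cosh(|λ₀'² − k²|^{1/2} y₁)(sin(λ₀' y₃) + i cos(λ₀' y₃)) if k² < λ₀'²; ψ₀(y₁,y₂,y₃) = 8 cos(|k² − λ₀'²|^{1/2} y₁)(sin(λ₀' y₃) + i cos(λ₀' y₃)) if k² > λ₀'²; and ψ₀(y₁,y₂,y₃) = 8 sin(λ₀' y₃) + 8i cos(λ₀' y₃) if k² = λ₀'². Then ψ₀ solves Δψ₀ + k²ψ₀ = 0 in B⁻_{r̃}(0), satisfies ∂ψ₀/∂ν + iλ₀' ψ₀ = 0 on the flat face B'_{r̃}(0) (outer normal ν = (0,0,1)), and |ψ₀(y)| ≥ 2 for every y ∈ B⁻_{r̃}(0). -/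

import Mathlib

open MeasureTheory Metric Set
open scoped NNReal

noncomputable section

abbrev E3 := EuclideanSpace ℝ (Fin 3)

/-- The lower half ball `B⁻_r(0) = {y ∈ ℝ³ : |y| < r, y₃ < 0}`. -/
def halfBallNeg (r : ℝ) : Set E3 := {y : E3 | ‖y‖ < r ∧ y 2 < 0}

/-- The flat face `B'_r(0) = {y ∈ ℝ³ : |y| < r, y₃ = 0}`. -/
def flatFace (r : ℝ) : Set E3 := {y : E3 | ‖y‖ < r ∧ y 2 = 0}

/-- `i`-th partial derivative (within a set) of a complex valued function. -/
def gradC (u : E3 → ℂ) (s : Set E3) (y : E3) (i : Fin 3) : ℂ :=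
  fderivWithin ℝ u s y (EuclideanSpace.single i 1)

/-- `|∇u|²` (within a set). -/
def gradSq (u : E3 → ℂ) (s : Set E3) (y : E3) : ℝ :=
  ∑ i : Fin 3, ‖gradC u s y i‖ ^ 2

/-- Assumptions on the matrix field `σ`: symmetry, `σ(0) = I`, `C^{0,1}` bound `Σ` on the
entries, and uniform ellipticity `½|ξ|² ≤ σξ·ξ ≤ C₁|ξ|²`. -/
def GoodSigma (σ : E3 → Matrix (Fin 3) (Fin 3) ℝ) (r Sig C₁ : ℝ) : Prop :=
  (∀ y ∈ closure (halfBallNeg r), (σ y).IsSymm) ∧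
  σ 0 = 1 ∧
  (∀ i j : Fin 3, ∀ y ∈ closure (halfBallNeg r), |σ y i j| ≤ Sig) ∧
  (∀ i j : Fin 3, ∀ y ∈ closure (halfBallNeg r), ∀ z ∈ closure (halfBallNeg r),
    |σ y i j - σ z i j| ≤ Sig * ‖y - z‖) ∧
  (∀ y ∈ closure (halfBallNeg r), ∀ ξ : E3,
    (1 / 2) * ∑ i : Fin 3, (ξ i) ^ 2 ≤ ∑ i : Fin 3, ∑ j : Fin 3, σ y i j * ξ i * ξ j ∧
    ∑ i : Fin 3, ∑ j : Fin 3, σ y i j * ξ i * ξ j ≤ C₁ * ∑ i : Fin 3, (ξ i) ^ 2)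

/-- Assumptions on `λ'`: real Lipschitz on the flat face with `C^{0,1}` bound `Λ'`. -/
def GoodLam (lam' : E3 → ℝ) (r Lam' : ℝ) : Prop :=
  (∀ y ∈ flatFace r, |lam' y| ≤ Lam') ∧
  (∀ y ∈ flatFace r, ∀ z ∈ flatFace r, |lam' y - lam' z| ≤ Lam' * ‖y - z‖)

/-- Test functions for the half-ball problems: `C¹` functions vanishing near the spherical
part of the boundary of `B⁻_r(0)`. -/
def HBTest (r : ℝ) (η : E3 → ℂ) : Prop :=
  ContDiff ℝ 1 η ∧ ∃ ρ : ℝ, 0 < ρ ∧ ρ < r ∧ ∀ y : E3, ρ ≤ ‖y‖ → η y = 0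

/-- The Laplacian of a complex-valued function on ℝ³. -/
def laplacian3 (u : E3 → ℂ) (x : E3) : ℂ :=
  ∑ i : Fin 3, iteratedFDeriv ℝ 2 u x ![EuclideanSpace.single i 1, EuclideanSpace.single i 1]

/-- Coordinate projection, complex valued. -/
def cproj (i : Fin 3) : E3 →L[ℝ] ℂ := Complex.ofRealCLM.comp (EuclideanSpace.proj i)

lemma cproj_apply (i : Fin 3) (v : E3) : cproj i v = ((v i : ℝ) : ℂ) := rfl

lemma hasFDerivAt_sep {f f1 g g1 : ℝ → ℂ} (hf : ∀ t, HasDerivAt f (f1 t) t)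
    (hg : ∀ t, HasDerivAt g (g1 t) t) (y : E3) :
    HasFDerivAt (fun y : E3 => f (y 0) * g (y 2))
      ((f1 (y 0) * g (y 2)) • cproj 0 + (f (y 0) * g1 (y 2)) • cproj 2) y := by
  have p0 : HasFDerivAt (fun y : E3 => y 0) (EuclideanSpace.proj (0 : Fin 3) : E3 →L[ℝ] ℝ) y :=
    (EuclideanSpace.proj (0 : Fin 3) : E3 →L[ℝ] ℝ).hasFDerivAt
  have p2 : HasFDerivAt (fun y : E3 => y 2) (EuclideanSpace.proj (2 : Fin 3) : E3 →L[ℝ] ℝ) y :=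
    (EuclideanSpace.proj (2 : Fin 3) : E3 →L[ℝ] ℝ).hasFDerivAt
  have h0 := (hf (y 0)).hasFDerivAt.comp y p0
  have h2 := (hg (y 2)).hasFDerivAt.comp y p2
  have h := h0.mul h2
  refine h.congr_fderiv ?_
  ext v
  simp [cproj_apply]
  ring

lemma laplacian3_sep {f f1 g g1 : ℝ → ℂ} {a b : ℂ} (hf : ∀ t, HasDerivAt f (f1 t) t)
    (hg : ∀ t, HasDerivAt g (g1 t) t) (hf1 : ∀ t, HasDerivAt f1 (a * f t) t)
    (hg1 : ∀ t, HasDerivAt g1 (b * g t) t) (y : E3) :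
    laplacian3 (fun y : E3 => f (y 0) * g (y 2)) y = (a + b) * (f (y 0) * g (y 2)) := by
  have e : fderiv ℝ (fun y : E3 => f (y 0) * g (y 2)) = fun y =>
      (f1 (y 0) * g (y 2)) • cproj 0 + (f (y 0) * g1 (y 2)) • cproj 2 :=
    funext fun y => (hasFDerivAt_sep hf hg y).fderiv
  have e2 := (((hasFDerivAt_sep hf1 hg y).smul_const (cproj 0)).add
    ((hasFDerivAt_sep hf hg1 y).smul_const (cproj 2))).fderiv
  unfold laplacian3
  simp only [iteratedFDeriv_two_apply, e]
  erw [e2]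
  simp [Fin.sum_univ_three, cproj_apply]
  ring

lemma hasDerivAt_sc (l t : ℝ) :
    HasDerivAt (fun t : ℝ => (Real.sin (l * t) : ℂ) + Complex.I * (Real.cos (l * t) : ℂ))
      (-Complex.I * l * ((Real.sin (l * t) : ℂ) + Complex.I * (Real.cos (l * t) : ℂ))) t := by
  have hl : HasDerivAt (fun t : ℝ => l * t) l t := by simpa using (hasDerivAt_id t).const_mul l
  have h := hl.sin.ofReal_comp.add (hl.cos.ofReal_comp.const_mul Complex.I)
  refine h.congr_deriv ?_
  push_cast
  linear_combination ((l : ℂ) * Complex.cos (l * t)) * Complex.I_sq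

lemma sep_main {f f1 : ℝ → ℂ} {a : ℂ} {k l : ℝ} (hf : ∀ t, HasDerivAt f (f1 t) t)
    (hf1 : ∀ t, HasDerivAt f1 (a * f t) t) (ha : a = (l : ℂ) ^ 2 - (k : ℂ) ^ 2)
    (ψ : E3 → ℂ) (hψ : ψ = fun y : E3 => f (y 0) *
      ((Real.sin (l * y 2) : ℂ) + Complex.I * (Real.cos (l * y 2) : ℂ))) (y : E3) :
    laplacian3 ψ y + (k : ℂ) ^ 2 * ψ y = 0 ∧
    fderiv ℝ ψ y (EuclideanSpace.single 2 1) + Complex.I * (l : ℂ) * ψ y = 0 ∧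
    ‖ψ y‖ = ‖f (y 0)‖ := by
  have hg1 : ∀ t : ℝ, HasDerivAt
      (fun t : ℝ => -Complex.I * l * ((Real.sin (l * t) : ℂ) + Complex.I * (Real.cos (l * t) : ℂ)))
      (-(l : ℂ) ^ 2 * ((Real.sin (l * t) : ℂ) + Complex.I * (Real.cos (l * t) : ℂ))) t := by
    intro t
    refine ((hasDerivAt_sc l t).const_mul (-Complex.I * (l : ℂ))).congr_deriv ?_
    linear_combination ((l : ℂ) ^ 2 * ((Real.sin (l * t) : ℂ) +
      Complex.I * (Real.cos (l * t) : ℂ))) * Complex.I_sq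
  subst hψ
  refine ⟨?_, ?_, ?_⟩
  · rw [laplacian3_sep hf (hasDerivAt_sc l) hf1 hg1 y, ha]
    ring
  · rw [(hasFDerivAt_sep hf (hasDerivAt_sc l) y).fderiv]
    simp [cproj_apply]
    ring
  · rw [norm_mul]
    have : ‖(Real.sin (l * y 2) : ℂ) + Complex.I * (Real.cos (l * y 2) : ℂ)‖ = 1 := by
      rw [mul_comm Complex.I, Complex.norm_add_mul_I, Real.sin_sq_add_cos_sq, Real.sqrt_one]
    rw [this, mul_one]

/-- **The explicit constant-coefficient half-ball solution `ψ₀`.**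
With `r̃ = (π/4) min{|k² − λ₀'²|^{-1/2}, 1/λ₀'}` (first entry omitted when `k² = λ₀'²`),
the explicitly defined `ψ₀` solves `Δψ₀ + k²ψ₀ = 0` in `B⁻_{r̃}(0)`, satisfies
`∂ψ₀/∂ν + iλ₀'ψ₀ = 0` on the flat face, and `|ψ₀| ≥ 2` on `B⁻_{r̃}(0)`. -/
theorem explicit_halfball_solution
    (k l0 rt : ℝ) (ψ₀ : E3 → ℂ)
    (hk : 0 < k) (hl0 : 0 < l0)
    (hrt : rt = if k ^ 2 = l0 ^ 2 then (Real.pi / 4) * (1 / l0)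
      else (Real.pi / 4) * min (|k ^ 2 - l0 ^ 2| ^ (-(1 / 2 : ℝ))) (1 / l0))
    (hψ₀ : ψ₀ = fun y : E3 =>
      if k ^ 2 < l0 ^ 2 then
        (8 : ℂ) * (Real.cosh (Real.sqrt (l0 ^ 2 - k ^ 2) * y 0) : ℂ) *
          ((Real.sin (l0 * y 2) : ℂ) + Complex.I * (Real.cos (l0 * y 2) : ℂ))
      else if l0 ^ 2 < k ^ 2 then
        (8 : ℂ) * (Real.cos (Real.sqrt (k ^ 2 - l0 ^ 2) * y 0) : ℂ) *
          ((Real.sin (l0 * y 2) : ℂ) + Complex.I * (Real.cos (l0 * y 2) : ℂ))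
      else
        (8 : ℂ) * (Real.sin (l0 * y 2) : ℂ) + (8 : ℂ) * Complex.I * (Real.cos (l0 * y 2) : ℂ)) :
    (∀ y ∈ halfBallNeg rt, laplacian3 ψ₀ y + (k : ℂ) ^ 2 * ψ₀ y = 0) ∧
    (∀ y ∈ flatFace rt,
      fderiv ℝ ψ₀ y (EuclideanSpace.single 2 1) + Complex.I * (l0 : ℂ) * ψ₀ y = 0) ∧
    (∀ y ∈ halfBallNeg rt, (2 : ℝ) ≤ ‖ψ₀ y‖) := by
  have key : ∃ f f1 : ℝ → ℂ, ∃ a : ℂ, (∀ t, HasDerivAt f (f1 t) t) ∧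
      (∀ t, HasDerivAt f1 (a * f t) t) ∧ a = (l0 : ℂ) ^ 2 - (k : ℂ) ^ 2 ∧
      (ψ₀ = fun y : E3 => f (y 0) *
        ((Real.sin (l0 * y 2) : ℂ) + Complex.I * (Real.cos (l0 * y 2) : ℂ))) ∧
      ∀ t, |t| < rt → 2 ≤ ‖f t‖ := by
    have hm : ∀ s t : ℝ, HasDerivAt (fun t : ℝ => s * t) s t := fun s t => by
      simpa using (hasDerivAt_id t).const_mul s
    rcases lt_trichotomy (k ^ 2) (l0 ^ 2) with h | h | h
    · set s := Real.sqrt (l0 ^ 2 - k ^ 2) with hs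
      have hs2 : s ^ 2 = l0 ^ 2 - k ^ 2 := Real.sq_sqrt (by linarith)
      refine ⟨fun t => 8 * (Real.cosh (s * t) : ℂ), fun t => 8 * ((Real.sinh (s * t) * s : ℝ) : ℂ),
        ((s ^ 2 : ℝ) : ℂ), fun t => (hm s t).cosh.ofReal_comp.const_mul 8, fun t => ?_, ?_, ?_, ?_⟩
      · refine (((hm s t).sinh.mul_const s).ofReal_comp.const_mul 8).congr_deriv ?_
        push_cast
        ring
      · rw [hs2]; push_cast; ring
      · rw [hψ₀]; funext y; simp only [if_pos h]
      · intro t _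
        have h1 := Real.one_le_cosh (s * t)
        rw [norm_mul, Complex.norm_real, Real.norm_of_nonneg (by linarith)]
        norm_num
        linarith
    · refine ⟨fun t => 8, fun t => 0, 0, fun t => hasDerivAt_const t _, fun t => ?_, ?_, ?_, ?_⟩
      · simpa using hasDerivAt_const t (0 : ℂ)
      · have : (k : ℂ) ^ 2 = (l0 : ℂ) ^ 2 := by exact_mod_cast h
        rw [this]; ring
      · rw [hψ₀]; funext y
        simp only [h, lt_irrefl, if_false]
        ring
      · intro t _
        norm_num
    · set s := Real.sqrt (k ^ 2 - l0 ^ 2) with hs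
      have hs2 : s ^ 2 = k ^ 2 - l0 ^ 2 := Real.sq_sqrt (by linarith)
      have hs0 : 0 < s := Real.sqrt_pos.2 (by linarith)
      refine ⟨fun t => 8 * (Real.cos (s * t) : ℂ), fun t => 8 * ((-Real.sin (s * t) * s : ℝ) : ℂ),
        ((-s ^ 2 : ℝ) : ℂ), fun t => (hm s t).cos.ofReal_comp.const_mul 8, fun t => ?_, ?_, ?_, ?_⟩
      · refine (((hm s t).sin.neg.mul_const s).ofReal_comp.const_mul 8).congr_deriv ?_
        push_cast
        ring
      · rw [hs2]; push_cast; ring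
      · rw [hψ₀]; funext y; simp only [if_neg h.not_gt, if_pos h]
      · intro t ht
        have hr : rt ≤ Real.pi / 4 * s⁻¹ := by
          rw [hrt, if_neg h.ne']
          have : |k ^ 2 - l0 ^ 2| ^ (-(1 / 2 : ℝ)) = s⁻¹ := by
            rw [abs_of_pos (by linarith), Real.rpow_neg (by linarith), ← Real.sqrt_eq_rpow]
          rw [this]
          exact mul_le_mul_of_nonneg_left (min_le_left _ _) (by positivity)
        have hst : |s * t| ≤ Real.pi / 3 := by
          rw [abs_mul, abs_of_pos hs0]
          have h1 : s * |t| ≤ s * (Real.pi / 4 * s⁻¹) :=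
            mul_le_mul_of_nonneg_left (by linarith) hs0.le
          have h2 : s * (Real.pi / 4 * s⁻¹) = Real.pi / 4 := by field_simp
          linarith [Real.pi_pos]
        have h1 : 1 / 2 ≤ Real.cos (s * t) := by
          rw [← Real.cos_pi_div_three, ← Real.cos_abs (s * t)]
          exact Real.cos_le_cos_of_nonneg_of_le_pi (abs_nonneg _) (by linarith [Real.pi_pos]) hst
        rw [norm_mul, Complex.norm_real, Real.norm_of_nonneg (by linarith)]
        norm_num
        linarith
  obtain ⟨f, f1, a, hf, hf1, ha, hψ, hb⟩ := key
  have main := sep_main hf hf1 ha ψ₀ hψ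
  refine ⟨fun y _ => (main y).1, fun y _ => (main y).2.1, fun y hy => ?_⟩
  rw [(main y).2.2]
  refine hb _ (lt_of_le_of_lt ?_ hy.1)
  simpa using PiLp.norm_apply_le y 0

end
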